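/- Assume n ≤ m and let i be an integer with 1 ≤ i ≤ 2N−1 and i ≠ N. Then det A₁ ≠ 0 and the polynomial q¹ᵢ = (det A₁)^{−1}·det A is a quasi-invariant of the form ∑_{s=0}^{m+n} aₛ·z^{(m+n−s)N+i}·w^{Ns} with a₀ = 1. Moreover, if Ā denotes the matrix obtained from A by replacing each entry z^{(m+n−s)N+i}·w^{Ns} of row 0 by w^{(m+n−s)N+i}·z^{Ns}, then q²ᵢ = (det A₁)^{−1}·det Ā is a quasi-invariant of the form ∑_{s=0}^{m+n} bₛ·w^{(m+n−s)N+i}·z^{Ns} with b₀ = 1. -/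

import Mathlib

open MvPolynomial Finset

noncomputable section

/-- The polynomial ring `R = ℂ[z,w]`. -/
abbrev R2 : Type := MvPolynomial (Fin 2) ℂ

/-- `z`, the first variable. -/
def zP : R2 := X 0

/-- `w`, the second variable (playing the role of `z̄`). -/
def wP : R2 := X 1

/-- `ε = exp(πi/N)`, a primitive `2N`-th root of unity. -/
def eps (N : ℕ) : ℂ := Complex.exp ((Real.pi : ℂ) * Complex.I / (N : ℂ))

/-- The reflection `σⱼ : z ↦ ε^j w, w ↦ ε^{-j} z` as a `ℂ`-algebra endomorphism. -/
def dihRefl (N j : ℕ) : R2 →ₐ[ℂ] R2 :=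
  aeval (fun k : Fin 2 => if k = 0 then C (eps N ^ j) * X 1 else C (eps N ^ (-(j : ℤ))) * X 0)

/-- The multiplicity `mⱼ`: `m` for even `j`, `n` for odd `j`. -/
def mult (m n j : ℕ) : ℕ := if Even j then m else n

/-- Quasi-invariance for the dihedral system `I₂(2N)` with multiplicities `(m,n)`. -/
def IsQuasiInv (N m n : ℕ) (p : R2) : Prop :=
  ∀ j < 2 * N, (zP - C (eps N ^ j) * wP) ^ (2 * mult m n j + 1) ∣ dihRefl N j p - p

/-- `cₛ = (m+n−2s)·N + i`, as a complex number. -/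
def cVal (N m n i s : ℕ) : ℂ := ((m : ℂ) + n - 2 * s) * N + i

/-- The scalar entry of the matrix `A = A(i)` in row `t ≥ 1` and column `s` (both `0`-based):
rows `1,…,n` have entries `cₛ^{2t−1}` at even `s` and `0` at odd `s`;
rows `n+1,…,2n` have entries `cₛ^{2(t−n)−1}` at odd `s` and `0` at even `s`;
rows `2n+1,…,n+m` have entries `cₛ^{2(t−n)−1}`. -/
def Aentry (N m n i : ℕ) (t s : ℕ) : ℂ :=
  if t ≤ n then (if Even s then cVal N m n i s ^ (2 * t - 1) else 0)
  else if t ≤ 2 * n then (if ¬ Even s then cVal N m n i s ^ (2 * (t - n) - 1) else 0)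
  else cVal N m n i s ^ (2 * (t - n) - 1)

/-- The matrix `A₁`: the matrix `A(i)` with row `0` and column `0` deleted. -/
def A1mat (N m n i : ℕ) : Matrix (Fin (m + n)) (Fin (m + n)) ℂ :=
  Matrix.of fun t s => Aentry N m n i ((t : ℕ) + 1) ((s : ℕ) + 1)

/-- The full `(m+n+1)×(m+n+1)` matrix `A = A(i)` over `R`: row `0` consists of the
monomials `z^{(m+n−s)N+i}·w^{Ns}`, the remaining rows are the scalar rows. -/
def Amat (N m n i : ℕ) : Matrix (Fin (m + n + 1)) (Fin (m + n + 1)) R2 :=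
  Matrix.of fun t s =>
    if (t : ℕ) = 0 then zP ^ ((m + n - (s : ℕ)) * N + i) * wP ^ (N * (s : ℕ))
    else C (Aentry N m n i (t : ℕ) (s : ℕ))

/-- The matrix `Ā`: `A` with row `0` replaced by the monomials `w^{(m+n−s)N+i}·z^{Ns}`. -/
def AmatBar (N m n i : ℕ) : Matrix (Fin (m + n + 1)) (Fin (m + n + 1)) R2 :=
  Matrix.of fun t s =>
    if (t : ℕ) = 0 then wP ^ ((m + n - (s : ℕ)) * N + i) * zP ^ (N * (s : ℕ))
    else C (Aentry N m n i (t : ℕ) (s : ℕ))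

/-!
Let `f = ∑ xₛ z ^ cₛ` and `g(z) = f(1/z)`. The scalar rows of `A` say that the odd moments of the
weights `xₛ` (up to order `2m`) and of `(-1)ˢ xₛ` (up to order `2n`) at the nodes `cₛ` vanish, that
is, that `f` and `g` agree to order `2m + 1` at `z ^ (2N) = 1` and, up to a constant factor, to
order `2n + 1` at `z ^ (2N) = -1`. Homogenising this Taylor condition gives quasi-invariance. The
cofactors of `A` along row `0` are such weights.

If `x₀ = 0`, the Wronskian of `f` and `g` is, up to a power of `z`, a polynomial in `z ^ (2N)` of
degree less than `2 (m + n)` with zeros of orders `2m` at `1` and `2n` at `-1`. So it vanishes, and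
its extreme coefficient `xᵣ xₗ (cᵣ + cₗ)` forces `x = 0`, because `cᵣ + cₗ = 0` would make `i` a
multiple of `N`. This proves `det A₁ ≠ 0`.
-/

section OddMoments

variable {ι R : Type*} [Fintype ι] [CommRing R] {k l : ℕ} {w c : ι → R}

/-- The power moments of odd order below `2 * k` of the weights `w` at the nodes `c` vanish.
Equivalently, `∑ s, w s * exp (c s * x)` is even in `x` up to order `2 * k`. -/
def OddMomentsVanish (k : ℕ) (w c : ι → R) : Prop :=
  ∀ t < k, ∑ s, w s * c s ^ (2 * t + 1) = 0

namespace OddMomentsVanish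

theorem const_mul (hw : OddMomentsVanish k w c) (a : R) :
    OddMomentsVanish k (fun s => a * w s) c := fun t ht => by
  simp_rw [mul_assoc, ← mul_sum, hw t ht, mul_zero]

theorem neg_nodes (hw : OddMomentsVanish k w c) : OddMomentsVanish k w (fun s => -c s) :=
  fun t ht => by
    simp_rw [(odd_two_mul_add_one t).neg_pow, mul_neg, sum_neg_distrib, hw t ht, neg_zero]

theorem moment_mul_moment_eq_zero (hw : OddMomentsVanish k w c) {a b : ℕ}
    (hodd : Odd (a + b)) (hlt : a + b < 2 * k) :
    (∑ s, w s * c s ^ a) * ∑ s, w s * c s ^ b = 0 := by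
  rcases Nat.even_or_odd' a with ⟨t, rfl | rfl⟩
  · obtain ⟨u, rfl⟩ : Odd b := (Nat.odd_add'.1 hodd).2 (even_two_mul t)
    rw [hw u (by lia), mul_zero]
  · rw [hw t (by lia), zero_mul]

theorem sum_mul_sub_pow_eq_zero_of_even (hw : OddMomentsVanish k w c) (heven : Even l)
    (hl : l < 2 * k) :
    ∑ q : ι × ι, w q.1 * w q.2 * (c q.1 * (c q.1 - c q.2) ^ l) = 0 := by
  calc ∑ q : ι × ι, w q.1 * w q.2 * (c q.1 * (c q.1 - c q.2) ^ l)
      = ∑ j ∈ range (l + 1), (-1) ^ (l - j) * l.choose j *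
          ((∑ s, w s * c s ^ (j + 1)) * ∑ u, w u * c u ^ (l - j)) := by
        simp_rw [Fintype.sum_mul_sum, ← Fintype.sum_prod_type', mul_sum]
        rw [sum_comm]
        refine sum_congr rfl fun q _ => ?_
        rw [sub_eq_add_neg, add_pow, mul_sum, mul_sum]
        refine sum_congr rfl fun j _ => ?_
        rw [neg_pow (c q.2)]
        ring
    _ = 0 := sum_eq_zero fun j hj => by
        have hj : j + 1 + (l - j) = l + 1 := by have := mem_range.1 hj; lia
        rw [hw.moment_mul_moment_eq_zero (hj ▸ heven.add_one) (by grind), mul_zero]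

-- The Wronskian of `f = ∑ w s * exp (c s * x)` and `f (-x)` is an even function with vanishing
-- derivatives of order below `2 * k` at `0`.
theorem sum_add_mul_sub_pow_eq_zero (hw : OddMomentsVanish k w c) (hl : l < 2 * k) :
    ∑ q : ι × ι, w q.1 * w q.2 * (c q.1 + c q.2) * (c q.1 - c q.2) ^ l = 0 := by
  have swap : ∑ q : ι × ι, w q.1 * w q.2 * (c q.2 * (c q.1 - c q.2) ^ l) =
      (-1) ^ l * ∑ q : ι × ι, w q.1 * w q.2 * (c q.1 * (c q.1 - c q.2) ^ l) := by
    rw [← (Equiv.prodComm ι ι).sum_comp, mul_sum]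
    refine sum_congr rfl fun q _ => ?_
    rw [Equiv.prodComm_apply, Prod.fst_swap, Prod.snd_swap, ← neg_sub (c q.1), neg_pow]
    ring
  have split : ∑ q : ι × ι, w q.1 * w q.2 * (c q.1 + c q.2) * (c q.1 - c q.2) ^ l =
      (1 + (-1) ^ l) * ∑ q : ι × ι, w q.1 * w q.2 * (c q.1 * (c q.1 - c q.2) ^ l) := by
    rw [add_mul, one_mul, ← swap, ← sum_add_distrib]
    exact sum_congr rfl fun q _ => by ring
  rw [split]
  rcases l.even_or_odd with heven | hodd
  · rw [hw.sum_mul_sub_pow_eq_zero_of_even heven hl, mul_zero]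
  · rw [hodd.neg_one_pow, add_neg_cancel, zero_mul]

end OddMomentsVanish

end OddMoments

section Divisibility

variable {ι K R : Type*} [Fintype ι] {k l d : ℕ}

theorem sum_mul_eval_eq_zero_of_moments [CommRing K] {w c : ι → K}
    (h : ∀ l < k, ∑ s, w s * c s ^ l = 0) {P : Polynomial K} (hP : P.natDegree < k) :
    ∑ s, w s * P.eval (c s) = 0 := by
  simp_rw [Polynomial.eval_eq_sum_range, mul_sum, mul_left_comm (w _)]
  rw [sum_comm]
  refine sum_eq_zero fun l hl => ?_
  rw [← mul_sum, h l (by have := mem_range.1 hl; lia), mul_zero]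

theorem pow_mul_pow_eq_sum_choose [CommRing R] (x y : R) {a b : ℕ} (h : a + b = d) :
    x ^ a * y ^ b = ∑ l ∈ range (d + 1), (a.choose l : R) * ((x - y) ^ l * y ^ (d - l)) := by
  calc x ^ a * y ^ b
      = ∑ l ∈ range (a + 1), (a.choose l : R) * ((x - y) ^ l * y ^ (d - l)) := by
        nth_rw 1 [← sub_add_cancel x y]
        rw [add_pow, sum_mul]
        refine sum_congr rfl fun l hl => ?_
        have := mem_range.1 hl
        rw [show d - l = a - l + b by lia, pow_add]
        ring
    _ = ∑ l ∈ range (d + 1), (a.choose l : R) * ((x - y) ^ l * y ^ (d - l)) := by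
        refine sum_subset (range_subset_range.2 (by lia)) fun l _ hl => ?_
        rw [Nat.choose_eq_zero_of_lt (by simpa using hl), Nat.cast_zero, zero_mul]

variable [Field K] [CharZero K] {w : ι → K} {a b : ι → ℕ}

theorem sum_mul_choose_eq_zero_of_moments (hab : ∀ s, a s + b s = d)
    (h : ∀ l < k, ∑ s, w s * ((a s : K) - b s) ^ l = 0) (hl : l < k) :
    ∑ s, w s * ((a s).choose l : K) = 0 := by
  let L : Polynomial K := Polynomial.C 2⁻¹ * Polynomial.X + Polynomial.C (2⁻¹ * (d : K))
  let P : Polynomial K := Polynomial.C (l.factorial : K)⁻¹ * (descPochhammer K l).comp L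
  have hP : P.natDegree ≤ l := calc
    P.natDegree ≤ ((descPochhammer K l).comp L).natDegree := Polynomial.natDegree_C_mul_le _ _
    _ ≤ l * L.natDegree :=
      Polynomial.natDegree_comp_le.trans_eq (by rw [descPochhammer_natDegree])
    _ ≤ l := (Nat.mul_le_mul_left l Polynomial.natDegree_linear_le).trans_eq (mul_one l)
  have hL (s : ι) : L.eval ((a s : K) - b s) = a s := by
    simp only [L, ← hab s, Polynomial.eval_add, Polynomial.eval_mul, Polynomial.eval_C,
      Polynomial.eval_X, Nat.cast_add]
    ring
  calc ∑ s, w s * ((a s).choose l : K)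
      = ∑ s, w s * P.eval ((a s : K) - b s) := sum_congr rfl fun s _ => by
        rw [Polynomial.eval_C_mul, Polynomial.eval_comp, hL,
          Nat.cast_choose_eq_descPochhammer_div, div_eq_inv_mul]
    _ = 0 := sum_mul_eval_eq_zero_of_moments h (hP.trans_lt hl)

variable [CommRing R] [Algebra K R]

theorem sub_pow_dvd_sum_of_moments (x y : R) (hab : ∀ s, a s + b s = d)
    (h : ∀ l < k, ∑ s, w s * ((a s : K) - b s) ^ l = 0) :
    (x - y) ^ k ∣ ∑ s, w s • (x ^ a s * y ^ b s) := by
  have expand : ∑ s, w s • (x ^ a s * y ^ b s) =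
      ∑ l ∈ range (d + 1), (∑ s, w s * ((a s).choose l : K)) • ((x - y) ^ l * y ^ (d - l)) := by
    simp_rw [sum_smul]
    rw [sum_comm]
    refine sum_congr rfl fun s _ => ?_
    rw [pow_mul_pow_eq_sum_choose x y (hab s), smul_sum]
    refine sum_congr rfl fun l _ => ?_
    rw [mul_smul, Nat.cast_smul_eq_nsmul, nsmul_eq_mul]
  rw [expand]
  refine dvd_sum fun l _ => ?_
  rcases lt_or_ge l k with hl | hl
  · rw [sum_mul_choose_eq_zero_of_moments hab h hl, zero_smul]
    exact dvd_zero _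
  · exact dvd_smul_of_dvd _ ((pow_dvd_pow _ hl).mul_right _)

theorem OddMomentsVanish.sub_pow_dvd_sum_sub_swap (x y : R) (hab : ∀ s, a s + b s = d)
    (h : OddMomentsVanish k w (fun s => (a s : K) - b s)) :
    (x - y) ^ (2 * k + 1) ∣ ∑ s, w s • (x ^ a s * y ^ b s - y ^ a s * x ^ b s) := by
  have moments : ∀ l < 2 * k + 1, ∑ s : ι ⊕ ι, Sum.elim w (-w) s *
      ((Sum.elim a b s : ℕ) - (Sum.elim b a s : ℕ) : K) ^ l = 0 := by
    intro l hl
    have antisymm (s : ι) : w s * ((a s : K) - b s) ^ l + -w s * ((b s : K) - a s) ^ l =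
        (1 - (-1) ^ l) * (w s * ((a s : K) - b s) ^ l) := by
      rw [← neg_sub (a s : K), neg_pow]
      ring
    simp only [Fintype.sum_sum_type, Sum.elim_inl, Sum.elim_inr, Pi.neg_apply]
    rw [← sum_add_distrib, sum_congr rfl fun s _ => antisymm s, ← mul_sum]
    rcases Nat.even_or_odd' l with ⟨t, rfl | rfl⟩
    · rw [(even_two_mul t).neg_one_pow, sub_self, zero_mul]
    · rw [h t (by lia), mul_zero]
  have key := sub_pow_dvd_sum_of_moments x y (d := d)
    (by rintro (s | s) <;> simp [hab, add_comm (b _)]) moments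
  simpa [Fintype.sum_sum_type, ← sum_sub_distrib, ← sub_eq_add_neg, smul_sub, mul_comm] using key

end Divisibility

section Wronskian

variable {M : ℕ} {R : Type*} [CommRing R] {v c : Fin M → R}

/-- The Wronskian `z (f' g - f g')` of `f = ∑ vₛ z ^ cₛ` and `g(z) = f(1/z)`, for nodes `cₛ` in
arithmetic progression with difference `h`, written as a polynomial in `X = z ^ h` after
multiplication by `X ^ (M - 1)`: the exponent `s + u.rev` is `M - 1 + s - u`. -/
def inversionWronskian (v c : Fin M → R) : Polynomial R :=
  ∑ q : Fin M × Fin M, Polynomial.C (v q.1 * v q.2 * (c q.1 + c q.2)) *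
    Polynomial.X ^ ((q.1 : ℕ) + q.2.rev)

theorem degree_inversionWronskian_lt (v c : Fin M → R) :
    (inversionWronskian v c).degree < (2 * M : ℕ) := by
  rw [← Polynomial.mem_degreeLT]
  refine Submodule.sum_mem _ fun q _ => Polynomial.mem_degreeLT.2 ?_
  exact (Polynomial.degree_C_mul_X_pow_le _ _).trans_lt (by norm_cast; lia)

theorem inversionWronskian_ne_zero [NoZeroDivisors R] (hv : v ≠ 0) (hc : ∀ s u, c s + c u ≠ 0) :
    inversionWronskian v c ≠ 0 := by
  classical
  have supp : ({s | v s ≠ 0} : Finset (Fin M)).Nonempty := by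
    obtain ⟨s, hs⟩ := Function.ne_iff.1 hv
    exact ⟨s, by simpa using hs⟩
  obtain ⟨r, hr, hmax⟩ := exists_max_image _ id supp
  obtain ⟨l, hl, hmin⟩ := exists_min_image _ id supp
  simp only [mem_filter_univ, id] at hr hl hmax hmin
  have extreme : (inversionWronskian v c).coeff (r + l.rev) = v r * v l * (c r + c l) := by
    rw [inversionWronskian, Polynomial.finsetSum_coeff,
      sum_eq_single_of_mem (r, l) (mem_univ _), Polynomial.coeff_C_mul_X_pow, if_pos rfl]
    rintro ⟨s, u⟩ - hne
    rw [Polynomial.coeff_C_mul_X_pow]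
    split_ifs with hexp
    · by_contra! hsu
      have hs := hmax s (by rintro h; simp [h] at hsu)
      have hu := hmin u (by rintro h; simp [h] at hsu)
      simp only [Fin.val_rev] at hexp
      exact hne (Prod.ext (by lia) (by lia))
    · rfl
  intro h
  exact mul_ne_zero (mul_ne_zero hr hl) (hc r l) (by rw [← extreme, h, Polynomial.coeff_zero])

theorem inversionWronskian_eq_C_mul_sum (v c : Fin M → R) {e : R} (he : e * e = 1) :
    inversionWronskian v c = Polynomial.C (e ^ (M - 1)) * ∑ q : Fin M × Fin M,
      (e ^ (q.1 : ℕ) * v q.1 * (e ^ (q.2 : ℕ) * v q.2) * (c q.1 + c q.2)) •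
        (Polynomial.X ^ ((q.1 : ℕ) + q.2.rev) * Polynomial.C e ^ ((q.2 : ℕ) + q.1.rev)) := by
  rw [inversionWronskian, mul_sum]
  refine sum_congr rfl fun q _ => ?_
  have signs :
      e ^ (M - 1) * (e ^ (q.1 : ℕ) * e ^ (q.2 : ℕ) * e ^ ((q.2 : ℕ) + q.1.rev)) = 1 := by
    have exponent : M - 1 + (q.1 + q.2 + (q.2 + q.1.rev)) = 2 * (M - 1 + q.2) := by
      simp only [Fin.val_rev]
      lia
    rw [← pow_add, ← pow_add, ← pow_add, exponent, pow_mul, sq, he, one_pow]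
  rw [Polynomial.smul_eq_C_mul, ← Polynomial.C_pow, mul_left_comm, mul_comm (Polynomial.X ^ _),
    ← mul_assoc, ← mul_assoc, ← Polynomial.C_mul, ← Polynomial.C_mul]
  congr 2
  linear_combination -(v q.1 * v q.2 * (c q.1 + c q.2)) * signs

variable {K : Type*} [Field K] [CharZero K] {v c : Fin M → K}

theorem sub_C_pow_dvd_inversionWronskian {k : ℕ} {h e : K} (hh : h ≠ 0)
    (hc : ∀ s u, c s - c u = h * ((s : ℕ) - (u : ℕ))) (he : e * e = 1)
    (hv : OddMomentsVanish k (fun s : Fin M => e ^ (s : ℕ) * v s) c) :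
    (Polynomial.X - Polynomial.C e) ^ (2 * k) ∣ inversionWronskian v c := by
  let a (q : Fin M × Fin M) : ℕ := q.1 + q.2.rev
  let b (q : Fin M × Fin M) : ℕ := q.2 + q.1.rev
  let W (q : Fin M × Fin M) : K :=
    e ^ (q.1 : ℕ) * v q.1 * (e ^ (q.2 : ℕ) * v q.2) * (c q.1 + c q.2)
  have hab (q : Fin M × Fin M) : (a q : K) - b q = 2 / h * (c q.1 - c q.2) := by
    have : (a q : ℤ) - b q = 2 * ((q.1 : ℕ) - (q.2 : ℕ)) := by
      simp only [a, b, Fin.val_rev]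
      omega
    rw [hc, ← mul_assoc, div_mul_cancel₀ _ hh]
    exact_mod_cast this
  have moments : ∀ l < 2 * k, ∑ q, W q * ((a q : K) - b q) ^ l = 0 := fun l hl => by
    simp_rw [hab, mul_pow, mul_left_comm (W _), ← mul_sum, W,
      hv.sum_add_mul_sub_pow_eq_zero hl, mul_zero]
  have key := sub_pow_dvd_sum_of_moments Polynomial.X (Polynomial.C e)
    (d := 2 * (M - 1)) (fun q => by simp only [a, b, Fin.val_rev]; lia) moments
  rw [inversionWronskian_eq_C_mul_sum v c he]
  exact key.mul_left _

theorem eq_zero_of_oddMomentsVanish {m n : ℕ} {h : K} (hM : M ≤ m + n) (hh : h ≠ 0)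
    (hc : ∀ s u, c s - c u = h * ((s : ℕ) - (u : ℕ))) (hc' : ∀ s u, c s + c u ≠ 0)
    (hm : OddMomentsVanish m v c)
    (hn : OddMomentsVanish n (fun s : Fin M => (-1) ^ (s : ℕ) * v s) c) : v = 0 := by
  by_contra hv
  have dvd_one := sub_C_pow_dvd_inversionWronskian (k := m) hh hc (one_mul 1) (by simpa using hm)
  have dvd_neg_one := sub_C_pow_dvd_inversionWronskian hh hc (by norm_num : (-1 : K) * -1 = 1) hn
  have coprime : IsCoprime ((Polynomial.X - Polynomial.C (1 : K)) ^ (2 * m))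
      ((Polynomial.X - Polynomial.C (-1)) ^ (2 * n)) :=
    (Polynomial.isCoprime_X_sub_C_of_isUnit_sub (by norm_num)).pow
  refine inversionWronskian_ne_zero hv hc'
    (Polynomial.eq_zero_of_dvd_of_degree_lt (coprime.mul_dvd dvd_one dvd_neg_one) ?_)
  refine (degree_inversionWronskian_lt v c).trans_le ?_
  rw [Polynomial.degree_mul, Polynomial.degree_pow, Polynomial.degree_pow,
    Polynomial.degree_X_sub_C, Polynomial.degree_X_sub_C, nsmul_one, nsmul_one]
  norm_cast
  lia

end Wronskian

section Nodes

theorem cVal_sub_cVal (N m n i s u : ℕ) :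
    cVal N m n i s - cVal N m n i u = -2 * N * ((s : ℂ) - u) := by
  rw [cVal, cVal]
  ring

theorem cVal_add_cVal_ne_zero {N i : ℕ} (m n s u : ℕ) (hi : ¬N ∣ i) :
    cVal N m n i s + cVal N m n i u ≠ 0 := by
  intro h
  have h2 : (2 : ℂ) * (i - N * (s + u - m - n)) = 0 := by
    rw [← h, cVal, cVal]
    ring
  have hdvd : (i : ℤ) = N * (s + u - m - n) := by
    exact_mod_cast sub_eq_zero.1 ((mul_eq_zero.1 h2).resolve_left two_ne_zero)
  exact hi (Int.natCast_dvd_natCast.1 ⟨_, hdvd⟩)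

theorem natCast_exponent_sub_eq_cVal (N m n i : ℕ) {s : ℕ} (hs : s ≤ m + n) :
    (((m + n - s) * N + i : ℕ) : ℂ) - (N * s : ℕ) = cVal N m n i s := by
  push_cast [hs]
  rw [cVal]
  ring

end Nodes

section ScalarRows

variable {N m n i : ℕ}

theorem Aentry_even_row {t : ℕ} (ht : t < n) (s : ℕ) :
    Aentry N m n i (t + 1) s = if Even s then cVal N m n i s ^ (2 * t + 1) else 0 := by
  rw [Aentry, if_pos (by lia), show 2 * (t + 1) - 1 = 2 * t + 1 by lia]

theorem Aentry_odd_row {t : ℕ} (ht : t < n) (s : ℕ) :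
    Aentry N m n i (n + t + 1) s = if Even s then 0 else cVal N m n i s ^ (2 * t + 1) := by
  rw [Aentry, if_neg (by lia), if_pos (by lia), ite_not,
    show 2 * (n + t + 1 - n) - 1 = 2 * t + 1 by lia]

theorem Aentry_full_row {t : ℕ} (ht : n ≤ t) (s : ℕ) :
    Aentry N m n i (n + t + 1) s = cVal N m n i s ^ (2 * t + 1) := by
  rw [Aentry, if_neg (by lia), if_neg (by lia), show 2 * (n + t + 1 - n) - 1 = 2 * t + 1 by lia]

theorem oddMomentsVanish_of_rows {ι : Type*} [Fintype ι] (hnm : n ≤ m) {σ : ι → ℕ} {x : ι → ℂ}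
    (hx : ∀ t < m + n, ∑ s, Aentry N m n i (t + 1) (σ s) * x s = 0) (j : ℕ) :
    OddMomentsVanish (mult m n j) (fun s => (-1) ^ (j * σ s) * x s)
      (fun s => cVal N m n i (σ s)) := by
  intro t ht
  rcases lt_or_ge t n with htn | htn
  · have even_rows := hx t (by lia)
    have odd_rows := hx (n + t) (by lia)
    simp_rw [Aentry_even_row htn] at even_rows
    simp_rw [Aentry_odd_row htn] at odd_rows
    have parity (s : ι) :
        (-1) ^ (j * σ s) * x s * cVal N m n i (σ s) ^ (2 * t + 1) =
          (if Even (σ s) then cVal N m n i (σ s) ^ (2 * t + 1) else 0) * x s +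
          (-1) ^ j * ((if Even (σ s) then 0 else cVal N m n i (σ s) ^ (2 * t + 1)) * x s) := by
      split_ifs with hs
      · rw [(hs.mul_left j).neg_one_pow]
        ring
      · rw [mul_comm j, pow_mul, (Nat.not_even_iff_odd.1 hs).neg_one_pow]
        ring
    simp_rw [parity, sum_add_distrib, ← mul_sum, even_rows, odd_rows, mul_zero, add_zero]
  · have hj : Even j := by
      by_contra hj
      rw [mult, if_neg hj] at ht
      lia
    have htm : t < m := by rwa [mult, if_pos hj] at ht
    rw [← hx (n + t) (by lia)]
    refine sum_congr rfl fun s _ => ?_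
    simp only [Aentry_full_row htn, (hj.mul_right (σ s)).neg_one_pow, one_mul, mul_comm (x s)]

theorem det_A1mat_ne_zero (hN : N ≠ 0) (hnm : n ≤ m) (hi : ¬N ∣ i) :
    (A1mat N m n i).det ≠ 0 := by
  intro hdet
  obtain ⟨v, hv, hker⟩ := Matrix.exists_mulVec_eq_zero_iff.2 hdet
  have moments := oddMomentsVanish_of_rows (σ := fun s : Fin (m + n) => s + 1) hnm
    fun t ht => congrFun hker ⟨t, ht⟩
  refine hv (eq_zero_of_oddMomentsVanish (c := fun s => cVal N m n i (s + 1)) (h := -2 * N)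
    le_rfl (by simpa using hN) ?_
    (fun s u => cVal_add_cVal_ne_zero m n _ _ hi) ?_ ?_)
  · intro s u
    rw [cVal_sub_cVal]
    push_cast
    ring
  · simpa [mult] using moments 0
  · simpa [mult, pow_succ] using (moments 1).const_mul (-1)

end ScalarRows

section Cofactors

theorem det_updateRow_map {ι R S : Type*} [Fintype ι] [DecidableEq ι] [CommRing R] [CommRing S]
    (f : R →+* S) (B : Matrix ι ι R) (i : ι) (g : ι → S) :
    ((B.map f).updateRow i g).det = ∑ s, f (B.adjugate s i) * g s := by
  rw [Matrix.det_eq_sum_mul_adjugate_row _ i]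
  refine sum_congr rfl fun s _ => ?_
  rw [Matrix.updateRow_self, Matrix.adjugate_apply, Matrix.updateRow_idem, ← Matrix.adjugate_apply,
    ← RingHom.mapMatrix_apply, ← RingHom.map_adjugate, RingHom.mapMatrix_apply, Matrix.map_apply,
    mul_comm]

variable (N m n i : ℕ)

/-- A square complex matrix with the scalar rows of `A`. Its row `0` is a placeholder, which the
cofactors along row `0` ignore. -/
def scalarRows : Matrix (Fin (m + n + 1)) (Fin (m + n + 1)) ℂ :=
  Matrix.of fun t s => Aentry N m n i t s

/-- The common coefficients `aₛ = bₛ` of `q¹ᵢ` and `q²ᵢ`: the cofactors of `A` along row `0`,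
divided by `det A₁`. -/
def normalizedCofactor (s : Fin (m + n + 1)) : ℂ :=
  (A1mat N m n i).det⁻¹ * (scalarRows N m n i).adjugate s 0

theorem C_inv_det_mul_det_updateRow (g : Fin (m + n + 1) → R2) :
    C (A1mat N m n i).det⁻¹ * (((scalarRows N m n i).map C).updateRow 0 g).det =
      ∑ s, C (normalizedCofactor N m n i s) * g s := by
  simp_rw [det_updateRow_map, mul_sum, ← mul_assoc, ← C_mul, normalizedCofactor]

theorem Amat_eq_updateRow : Amat N m n i = ((scalarRows N m n i).map C).updateRow 0
    fun s => zP ^ ((m + n - (s : ℕ)) * N + i) * wP ^ (N * (s : ℕ)) := by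
  ext1 t s
  cases t using Fin.cases <;> simp [Amat, scalarRows]

theorem AmatBar_eq_updateRow : AmatBar N m n i = ((scalarRows N m n i).map C).updateRow 0
    fun s => wP ^ ((m + n - (s : ℕ)) * N + i) * zP ^ (N * (s : ℕ)) := by
  ext1 t s
  cases t using Fin.cases <;> simp [AmatBar, scalarRows]

variable {N m n i}

theorem normalizedCofactor_zero (hdet : (A1mat N m n i).det ≠ 0) :
    normalizedCofactor N m n i 0 = 1 := by
  have minor : (scalarRows N m n i).submatrix (Fin.succAbove 0) (Fin.succAbove 0) =
      A1mat N m n i := by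
    ext t s
    simp [scalarRows, A1mat]
  rw [normalizedCofactor, Matrix.adjugate_fin_succ_eq_det_submatrix, minor]
  simp [hdet]

theorem sum_Aentry_mul_normalizedCofactor {t : ℕ} (ht : t < m + n) :
    ∑ s : Fin (m + n + 1), Aentry N m n i (t + 1) s * normalizedCofactor N m n i s = 0 := by
  have orthogonal : (scalarRows N m n i * (scalarRows N m n i).adjugate) ⟨t + 1, by lia⟩ 0 = 0 := by
    rw [Matrix.mul_adjugate, Matrix.smul_apply, Matrix.one_apply_ne (by simp [Fin.ext_iff]),
      smul_zero]
  simp_rw [normalizedCofactor, mul_left_comm (Aentry ..), ← mul_sum]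
  exact mul_eq_zero_of_right _ orthogonal

end Cofactors

section QuasiInvariance

variable {N m n i : ℕ}

theorem eps_ne_zero (N : ℕ) : eps N ≠ 0 := Complex.exp_ne_zero _

theorem dihRefl_zP (N j : ℕ) : dihRefl N j zP = C (eps N ^ j) * wP := by
  simp [dihRefl, zP, wP]

theorem dihRefl_wP (N j : ℕ) : dihRefl N j wP = C (eps N ^ j)⁻¹ * zP := by
  simp [dihRefl, zP, wP]

theorem isQuasiInv_sum_of_oddMomentsVanish {ι : Type*} [Fintype ι] {d : ℕ} {x : ι → ℂ}
    {a b : ι → ℕ} (hab : ∀ s, a s + b s = d)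
    (hx : ∀ j, OddMomentsVanish (mult m n j) (fun s => (eps N ^ j)⁻¹ ^ b s * x s)
      (fun s => (a s : ℂ) - b s)) :
    IsQuasiInv N m n (∑ s, C (x s) * zP ^ a s * wP ^ b s) := by
  intro j _
  rw [dvd_sub_comm]
  -- In the coordinates `z` and `ε ^ j * w` the reflection is the swap.
  convert (hx j).sub_pow_dvd_sum_sub_swap zP (C (eps N ^ j) * wP) hab using 1
  rw [map_sum, ← sum_sub_distrib]
  refine sum_congr rfl fun s _ => ?_
  have cancel : (C ((eps N ^ j)⁻¹ ^ b s) : R2) * C (eps N ^ j) ^ b s = 1 := by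
    rw [← C_pow, ← C_mul, ← mul_pow, inv_mul_cancel₀ (pow_ne_zero j (eps_ne_zero N)), one_pow,
      C_1]
  simp only [map_mul (dihRefl N j), map_pow (dihRefl N j), dihRefl_zP, dihRefl_wP, algHom_C,
    algebraMap_eq, smul_eq_C_mul, C_mul, C_pow, mul_pow] at cancel ⊢
  linear_combination -C (x s) * zP ^ a s * wP ^ b s * cancel

theorem eps_pow_self (hN : N ≠ 0) : eps N ^ N = -1 := by
  rw [eps, ← Complex.exp_nat_mul, mul_div_cancel₀ _ (Nat.cast_ne_zero.2 hN),
    Complex.exp_pi_mul_I]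

theorem inv_eps_pow_pow_mul (hN : N ≠ 0) (j s : ℕ) :
    (eps N ^ j)⁻¹ ^ (N * s) = (-1) ^ (j * s) := by
  rw [← inv_pow, ← pow_mul, show j * (N * s) = N * (j * s) by ring, pow_mul, inv_pow,
    eps_pow_self hN, inv_neg_one]

theorem exponent_add_exponent {s : ℕ} (hs : s ≤ m + n) :
    (m + n - s) * N + i + N * s = (m + n) * N + i := by
  obtain ⟨r, hr⟩ := Nat.exists_eq_add_of_le hs
  rw [hr, Nat.add_sub_cancel_left]
  ring

variable {x : Fin (m + n + 1) → ℂ}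

theorem isQuasiInv_of_rows (hN : N ≠ 0) (hnm : n ≤ m)
    (hx : ∀ t < m + n, ∑ s : Fin (m + n + 1), Aentry N m n i (t + 1) s * x s = 0) :
    IsQuasiInv N m n (∑ s : Fin (m + n + 1),
      C (x s) * zP ^ ((m + n - (s : ℕ)) * N + i) * wP ^ (N * (s : ℕ))) := by
  refine isQuasiInv_sum_of_oddMomentsVanish (fun s => exponent_add_exponent s.is_le) fun j => ?_
  simp_rw [natCast_exponent_sub_eq_cVal N m n i (Fin.is_le _), inv_eps_pow_pow_mul hN]
  exact oddMomentsVanish_of_rows hnm hx j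

theorem isQuasiInv_bar_of_rows (hN : N ≠ 0) (hnm : n ≤ m)
    (hx : ∀ t < m + n, ∑ s : Fin (m + n + 1), Aentry N m n i (t + 1) s * x s = 0) :
    IsQuasiInv N m n (∑ s : Fin (m + n + 1),
      C (x s) * wP ^ ((m + n - (s : ℕ)) * N + i) * zP ^ (N * (s : ℕ))) := by
  simp_rw [mul_right_comm (C _) (wP ^ _) (zP ^ _)]
  refine isQuasiInv_sum_of_oddMomentsVanish
    (fun s => (add_comm _ _).trans (exponent_add_exponent s.is_le)) fun j => ?_
  have weight (s : Fin (m + n + 1)) : (eps N ^ j)⁻¹ ^ ((m + n - (s : ℕ)) * N + i) * x s =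
      (eps N ^ j)⁻¹ ^ ((m + n) * N + i) * ((-1) ^ (j * (s : ℕ)) * x s) := by
    rw [← exponent_add_exponent s.is_le, pow_add _ _ (N * _), inv_eps_pow_pow_mul hN, mul_assoc,
      ← mul_assoc ((-1) ^ _), ← mul_pow, neg_one_mul, neg_neg, one_pow, one_mul]
  have node (s : Fin (m + n + 1)) :
      ((N * (s : ℕ) : ℕ) : ℂ) - ((m + n - (s : ℕ)) * N + i : ℕ) = -cVal N m n i s := by
    rw [← natCast_exponent_sub_eq_cVal N m n i s.is_le, neg_sub]
  simp_rw [weight, node]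
  exact ((oddMomentsVanish_of_rows hnm hx j).const_mul _).neg_nodes

end QuasiInvariance

theorem determinant_formulas_general {N m n i : ℕ} (hN : N ≠ 0) (hnm : n ≤ m) (hi : ¬N ∣ i) :
    (A1mat N m n i).det ≠ 0 ∧
    (∃ a : ℕ → ℂ, a 0 = 1 ∧
      C ((A1mat N m n i).det)⁻¹ * (Amat N m n i).det =
        ∑ s ∈ Finset.range (m + n + 1),
          C (a s) * zP ^ ((m + n - s) * N + i) * wP ^ (N * s)) ∧
    IsQuasiInv N m n (C ((A1mat N m n i).det)⁻¹ * (Amat N m n i).det) ∧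
    (∃ b : ℕ → ℂ, b 0 = 1 ∧
      C ((A1mat N m n i).det)⁻¹ * (AmatBar N m n i).det =
        ∑ s ∈ Finset.range (m + n + 1),
          C (b s) * wP ^ ((m + n - s) * N + i) * zP ^ (N * s)) ∧
    IsQuasiInv N m n (C ((A1mat N m n i).det)⁻¹ * (AmatBar N m n i).det) := by
  have hdet := det_A1mat_ne_zero hN hnm hi
  have coeff_zero := normalizedCofactor_zero hdet
  have rows (t : ℕ) (ht : t < m + n) := sum_Aentry_mul_normalizedCofactor (N := N) (i := i) ht
  simp_rw [Amat_eq_updateRow, AmatBar_eq_updateRow, C_inv_det_mul_det_updateRow, ← mul_assoc]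
  refine ⟨hdet,
    ⟨fun s => normalizedCofactor N m n i (Fin.ofNat _ s), coeff_zero, ?_⟩,
    isQuasiInv_of_rows hN hnm rows,
    ⟨fun s => normalizedCofactor N m n i (Fin.ofNat _ s), coeff_zero, ?_⟩,
    isQuasiInv_bar_of_rows hN hnm rows⟩ <;>
  simp [sum_range]

theorem determinant_formulas (N m n i : ℕ) (hN : 1 ≤ N) (hnm : n ≤ m)
    (hi1 : 1 ≤ i) (hi2 : i ≤ 2 * N - 1) (hiN : i ≠ N) :
    (A1mat N m n i).det ≠ 0 ∧
    (∃ a : ℕ → ℂ, a 0 = 1 ∧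
      C ((A1mat N m n i).det)⁻¹ * (Amat N m n i).det =
        ∑ s ∈ Finset.range (m + n + 1),
          C (a s) * zP ^ ((m + n - s) * N + i) * wP ^ (N * s)) ∧
    IsQuasiInv N m n (C ((A1mat N m n i).det)⁻¹ * (Amat N m n i).det) ∧
    (∃ b : ℕ → ℂ, b 0 = 1 ∧
      C ((A1mat N m n i).det)⁻¹ * (AmatBar N m n i).det =
        ∑ s ∈ Finset.range (m + n + 1),
          C (b s) * wP ^ ((m + n - s) * N + i) * zP ^ (N * s)) ∧
    IsQuasiInv N m n (C ((A1mat N m n i).det)⁻¹ * (AmatBar N m n i).det) :=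
  determinant_formulas_general (by lia) hnm fun hdvd =>
    hiN (Nat.eq_of_dvd_of_lt_two_mul (by lia) hdvd (by lia))
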